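/- The feedback consumption rate ĉ(x) := (v'(x))^{−1/γ} / x converges at infinity: lim_{x→∞} ĉ(x) = β/γ + (1−γ)( μ/γ + σ²/2 ). -/

import Mathlib

/-!
In the logarithmic variable `t = log x`, the functions `w = v x / x ^ (1 - γ)` and
`p = v' x / x ^ (-γ)` satisfy `p = w' + (1 - γ) * w`, and the HJB equation becomes an autonomous
second-order equation for `w` up to the vanishing production term `f x / x`. Since `v'' x ≤ 0` and
`x * v' x ≤ v x`, it forces `w' < 0` wherever `w` is large, so `w` is bounded. There are sequences
realizing the limit superior (inferior) of `w` along which `w'` tends to `0` and `w''` is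
asymptotically nonpositive (nonnegative); in the limit the equation bounds the limit superior from
above and the limit inferior from below by the same constant, so `w` converges. Finally `v` is
concave, so its asymptotics can be differentiated, which gives the limit of `p`.
-/

open Set Filter Topology

section SecondOrder

theorem nonpos_of_isLocalMax_of_hasDerivAt {f f' : ℝ → ℝ} {f'' x : ℝ} (h : IsLocalMax f x)
    (hf : ∀ᶠ y in 𝓝 x, HasDerivAt f (f' y) y) (hf' : HasDerivAt f' f'' x) : f'' ≤ 0 := by
  by_contra! hpos
  have hderiv : deriv f =ᶠ[𝓝 x] f' := hf.mono fun y hy => hy.deriv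
  have hderiv₂ : deriv (deriv f) x = f'' := hderiv.deriv_eq.trans hf'.deriv
  have hmin : IsLocalMin f x := isLocalMin_of_deriv_deriv_pos (hderiv₂ ▸ hpos) h.deriv_eq_zero
    hf.self_of_nhds.continuousAt
  have hconst : f =ᶠ[𝓝 x] fun _ => f x := by
    filter_upwards [h, hmin] with y hle hge using le_antisymm hle hge
  have hzero : deriv (deriv f) x = 0 := by
    rw [hconst.deriv.deriv_eq]
    simp
  exact hpos.ne' (hderiv₂.symm.trans hzero)

theorem nonpos_of_concaveOn_of_hasDerivAt {f f' : ℝ → ℝ} {f'' x : ℝ} {s : Set ℝ} (hs : s ∈ 𝓝 x)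
    (hconc : ConcaveOn ℝ s f) (hf : ∀ y ∈ s, HasDerivAt f (f' y) y) (hf' : HasDerivAt f' f'' x) :
    f'' ≤ 0 := by
  have hanti : AntitoneOn f' s :=
    (hconc.antitoneOn_deriv fun y hy => (hf y hy).differentiableAt).congr
      fun y hy => (hf y hy).deriv
  rw [← hf'.deriv, ← derivWithin_of_mem_nhds hs]
  exact hanti.derivWithin_nonpos

end SecondOrder

section MaximumPrinciple

variable {w w' w'' : ℝ → ℝ}

theorem exists_approx_critical_of_lt_add {t₀ δ : ℝ}
    (hw : ∀ s ∈ Icc (t₀ - 1) (t₀ + 1), HasDerivAt w (w' s) s)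
    (hw' : ∀ s ∈ Icc (t₀ - 1) (t₀ + 1), HasDerivAt w' (w'' s) s)
    (hlt : ∀ s ∈ Icc (t₀ - 1) (t₀ + 1), w s < w t₀ + δ) :
    ∃ s ∈ Icc (t₀ - 1) (t₀ + 1), w t₀ ≤ w s ∧ |w' s| ≤ 2 * δ ∧ w'' s ≤ 2 * δ := by
  have ht₀ : t₀ ∈ Icc (t₀ - 1) (t₀ + 1) := ⟨by linarith, by linarith⟩
  have hδ : 0 < δ := by linarith [hlt t₀ ht₀]
  -- The penalty costs `δ` at both endpoints, so the penalized function peaks in the interior.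
  let g : ℝ → ℝ := fun s => w s - δ * (s - t₀) ^ 2
  let g' : ℝ → ℝ := fun s => w' s - 2 * δ * (s - t₀)
  have hg : ∀ s ∈ Icc (t₀ - 1) (t₀ + 1), HasDerivAt g (g' s) s := fun s hs =>
    ((hw s hs).sub ((((hasDerivAt_id s).sub_const t₀).pow 2).const_mul δ)).congr_deriv <| by
      simp only [g', id_eq]
      ring
  have hend : ∀ s ∈ Icc (t₀ - 1) (t₀ + 1) \ Ioo (t₀ - 1) (t₀ + 1), g s < g t₀ := by
    intro s hs
    rw [Icc_sdiff_Ioo_same (by linarith)] at hs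
    have hsq : (s - t₀) ^ 2 = 1 := by rcases hs with rfl | rfl <;> ring
    have hws := hlt s (by rcases hs with rfl | rfl <;> constructor <;> linarith)
    simp only [g, hsq, sub_self]
    linarith
  obtain ⟨s, hs, hmax⟩ := isCompact_Icc.exists_isMaxOn_mem_subset
    (fun s hs => (hg s hs).continuousAt.continuousWithinAt) ht₀ hend
  have hs_Icc := Ioo_subset_Icc_self hs
  have hloc : IsLocalMax g s := hmax.isLocalMax (Icc_mem_nhds hs.1 hs.2)
  have hw's : w' s = 2 * δ * (s - t₀) := sub_eq_zero.1 (hloc.hasDerivAt_eq_zero (hg s hs_Icc))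
  have hg's : HasDerivAt g' (w'' s - 2 * δ) s :=
    ((hw' s hs_Icc).sub (((hasDerivAt_id s).sub_const t₀).const_mul (2 * δ))).congr_deriv <| by
      rw [mul_one]
  refine ⟨s, hs_Icc, ?_, ?_, ?_⟩
  · have hle : w t₀ - δ * (t₀ - t₀) ^ 2 ≤ w s - δ * (s - t₀) ^ 2 := hmax ht₀
    nlinarith [mul_nonneg hδ.le (sq_nonneg (s - t₀))]
  · rw [hw's, abs_mul, abs_of_pos (by positivity : 0 < 2 * δ)]
    exact mul_le_of_le_one_right (by positivity) (abs_le.2 ⟨by linarith [hs.1], by linarith [hs.2]⟩)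
  · have hnhds : Icc (t₀ - 1) (t₀ + 1) ∈ 𝓝 s := Icc_mem_nhds hs.1 hs.2
    exact sub_nonpos.1 (nonpos_of_isLocalMax_of_hasDerivAt hloc (eventually_of_mem hnhds hg) hg's)

theorem frequently_approx_critical_near_limsup
    (hw : ∀ᶠ t in atTop, HasDerivAt w (w' t) t) (hw' : ∀ᶠ t in atTop, HasDerivAt w' (w'' t) t)
    (hbdd : IsBoundedUnder (· ≤ ·) atTop w) (hcobdd : IsCoboundedUnder (· ≤ ·) atTop w)
    {ε : ℝ} (hε : 0 < ε) :
    ∃ᶠ t in atTop, |w t - limsup w atTop| ≤ ε ∧ |w' t| ≤ ε ∧ w'' t ≤ ε := by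
  set L := limsup w atTop
  have hlt : ∀ᶠ t in atTop, w t < L + ε / 4 := eventually_lt_of_limsup_lt (by linarith) hbdd
  have hgt : ∃ᶠ t in atTop, L - ε / 4 < w t := frequently_lt_of_lt_limsup hcobdd (by linarith)
  obtain ⟨T, hT⟩ := eventually_atTop.1 (hw.and (hw'.and hlt))
  refine frequently_atTop.2 fun a => ?_
  obtain ⟨t₀, ht₀, hwt₀⟩ := frequently_atTop.1 hgt (max a T + 1)
  have hge : ∀ s ∈ Icc (t₀ - 1) (t₀ + 1), max a T ≤ s := fun s hs => by linarith [hs.1]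
  have hIcc : ∀ s ∈ Icc (t₀ - 1) (t₀ + 1), T ≤ s := fun s hs => (le_max_right a T).trans (hge s hs)
  obtain ⟨s, hs, hws, hw's, hw''s⟩ := exists_approx_critical_of_lt_add (δ := ε / 2)
    (fun s hs => (hT s (hIcc s hs)).1) (fun s hs => (hT s (hIcc s hs)).2.1)
    (fun s hs => by linarith [(hT s (hIcc s hs)).2.2])
  have hupper := (hT s (hIcc s hs)).2.2
  exact ⟨s, (le_max_left a T).trans (hge s hs),
    abs_le.2 ⟨by linarith, by linarith⟩, by linarith, by linarith⟩

theorem exists_seq_tendsto_limsup_of_hasDerivAt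
    (hw : ∀ᶠ t in atTop, HasDerivAt w (w' t) t) (hw' : ∀ᶠ t in atTop, HasDerivAt w' (w'' t) t)
    (hbdd : IsBoundedUnder (· ≤ ·) atTop w) (hcobdd : IsCoboundedUnder (· ≤ ·) atTop w) :
    ∃ u : ℕ → ℝ, Tendsto u atTop atTop ∧
      Tendsto (w ∘ u) atTop (𝓝 (limsup w atTop)) ∧
      Tendsto (w' ∘ u) atTop (𝓝 0) ∧ ∀ n : ℕ, w'' (u n) ≤ 1 / (n + 1 : ℝ) := by
  have hnear (n : ℕ) := frequently_atTop.1 (frequently_approx_critical_near_limsup hw hw' hbdd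
    hcobdd (Nat.one_div_pos_of_nat (α := ℝ) (n := n))) n
  choose u hu hwu hw'u hw''u using hnear
  have hzero := tendsto_one_div_add_atTop_nhds_zero_nat (𝕜 := ℝ)
  exact ⟨u, tendsto_atTop_mono hu tendsto_natCast_atTop_atTop,
    tendsto_iff_norm_sub_tendsto_zero.2 (squeeze_zero (fun n => norm_nonneg _) hwu hzero),
    squeeze_zero_norm hw'u hzero, hw''u⟩

theorem exists_seq_tendsto_liminf_of_hasDerivAt
    (hw : ∀ᶠ t in atTop, HasDerivAt w (w' t) t) (hw' : ∀ᶠ t in atTop, HasDerivAt w' (w'' t) t)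
    (hbdd : IsBoundedUnder (· ≥ ·) atTop w) (hcobdd : IsCoboundedUnder (· ≥ ·) atTop w) :
    ∃ u : ℕ → ℝ, Tendsto u atTop atTop ∧
      Tendsto (w ∘ u) atTop (𝓝 (liminf w atTop)) ∧
      Tendsto (w' ∘ u) atTop (𝓝 0) ∧ ∀ n : ℕ, -(1 / (n + 1 : ℝ)) ≤ w'' (u n) := by
  obtain ⟨b, hb⟩ := hcobdd
  have hcobdd_neg : IsCoboundedUnder (· ≤ ·) atTop (-w) :=
    ⟨-b, fun a ha => neg_le.1 (hb (-a) (by simpa [neg_le] using ha))⟩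
  have hlimsup : limsup (-w) atTop = -liminf w atTop := by
    simpa [Pi.neg_def] using limsup_const_sub atTop w 0 ⟨b, hb⟩ hbdd
  obtain ⟨u, hu, hwu, hw'u, hw''u⟩ := exists_seq_tendsto_limsup_of_hasDerivAt
    (w := -w) (w' := -w') (w'' := -w'') (hw.mono fun t ht => ht.neg) (hw'.mono fun t ht => ht.neg)
    (isBoundedUnder_le_neg.2 hbdd) hcobdd_neg
  refine ⟨u, hu, ?_, ?_, fun n => neg_le.1 (hw''u n)⟩
  · simpa [hlimsup, Function.comp_def] using hwu.neg
  · simpa [Function.comp_def] using hw'u.neg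

theorem isBoundedUnder_le_of_deriv_neg {C : ℝ} (hw : ∀ᶠ t in atTop, HasDerivAt w (w' t) t)
    (hneg : ∀ᶠ t in atTop, C ≤ w t → w' t < 0) : IsBoundedUnder (· ≤ ·) atTop w := by
  obtain ⟨T, hT⟩ := eventually_atTop.1 (hw.and hneg)
  refine isBoundedUnder_of_eventually_le (a := max (w T) C) ?_
  filter_upwards [eventually_ge_atTop T] with t ht
  refine image_le_of_deriv_right_lt_deriv_boundary (a := T) (b := t)
    (B := fun _ => max (w T) C) (B' := fun _ => 0)
    (fun s hs => (hT s hs.1).1.continuousAt.continuousWithinAt)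
    (fun s hs => (hT s hs.1).1.hasDerivWithinAt) (le_max_left _ _)
    (fun s => hasDerivAt_const s _) (fun s hs heq => ?_) (right_mem_Icc.2 ht)
  exact (hT s hs.1).2 (heq ▸ le_max_right _ _)

end MaximumPrinciple

section ConcaveAsymptotics

variable {f f' : ℝ → ℝ} {ρ K : ℝ}

theorem mul_deriv_le_of_concaveOn {m x : ℝ} (hconc : ConcaveOn ℝ (Ioi 0) f)
    (hnonneg : ∀ y > 0, 0 ≤ f y) (hx : 0 < x) (hf : HasDerivAt f m x) : x * m ≤ f x := by
  have hsecant : ∀ᶠ y in 𝓝[>] (0 : ℝ), (x - y) * m ≤ f x := by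
    filter_upwards [Ioo_mem_nhdsGT hx] with y hy
    have hslope := hconc.le_slope_of_hasDerivAt hy.1 hx hy.2 hf
    rw [slope_def_field, le_div_iff₀ (sub_pos.2 hy.2)] at hslope
    linarith [hnonneg y hy.1]
  have hlim : Tendsto (fun y => (x - y) * m) (𝓝[>] 0) (𝓝 (x * m)) := by
    have hcont : Continuous fun y => (x - y) * m := by fun_prop
    simpa using (hcont.tendsto 0).mono_left nhdsWithin_le_nhds
  exact le_of_tendsto hlim hsecant

theorem tendsto_slope_mul_left_div_rpow {l : ℝ} (hl : 0 < l)
    (hK : Tendsto (fun x => f x / x ^ ρ) atTop (𝓝 K)) :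
    Tendsto (fun x => slope f x (l * x) / x ^ (ρ - 1)) atTop
      (𝓝 (K * slope (fun y : ℝ => y ^ ρ) 1 l)) := by
  have hdilate : Tendsto (fun x => f (l * x) / (l * x) ^ ρ) atTop (𝓝 K) :=
    hK.comp (tendsto_id.const_mul_atTop hl)
  have hlim := ((hdilate.const_mul (l ^ ρ)).sub hK).div_const (l - 1)
  have hlimit : (l ^ ρ * K - K) / (l - 1) = K * slope (fun y : ℝ => y ^ ρ) 1 l := by
    rw [slope_def_field, Real.one_rpow]
    ring
  rw [hlimit] at hlim
  refine hlim.congr' ?_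
  filter_upwards [eventually_gt_atTop 0] with x hx
  have hlρ : l ^ ρ ≠ 0 := (Real.rpow_pos_of_pos hl ρ).ne'
  rw [slope_def_field, Real.mul_rpow hl.le hx.le, Real.rpow_sub_one hx.ne', ← sub_one_mul]
  rcases eq_or_ne (l - 1) 0 with hl₁ | hl₁
  · simp [hl₁]
  · field_simp

theorem tendsto_deriv_div_rpow_of_concaveOn (hf : ∀ x > 0, HasDerivAt f (f' x) x)
    (hconc : ConcaveOn ℝ (Ioi 0) f) (hK : Tendsto (fun x => f x / x ^ ρ) atTop (𝓝 K)) :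
    Tendsto (fun x => f' x / x ^ (ρ - 1)) atTop (𝓝 (ρ * K)) := by
  have hslope : Tendsto (fun l : ℝ => K * slope (fun y : ℝ => y ^ ρ) 1 l) (𝓝[≠] 1)
      (𝓝 (ρ * K)) := by
    have hderiv := Real.hasDerivAt_rpow_const (x := 1) (p := ρ) (Or.inl one_ne_zero)
    simpa [mul_comm] using hderiv.tendsto_slope.const_mul K
  -- Concavity squeezes `f' x` between the slopes of `f` from `x` to `l * x`, `l > 1` and `l < 1`.
  refine tendsto_order.2 ⟨fun a ha => ?_, fun a ha => ?_⟩
  · obtain ⟨l, hal, hl⟩ := (((hslope.mono_left (nhdsGT_le_nhdsNE _)).eventually_const_lt ha).and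
      self_mem_nhdsWithin).exists
    have hl₀ : 0 < l := one_pos.trans hl
    filter_upwards [(tendsto_slope_mul_left_div_rpow hl₀ hK).eventually_const_lt hal,
      eventually_gt_atTop 0] with x hax hx
    have hle : slope f x (l * x) ≤ f' x := hconc.slope_le_of_hasDerivAt hx (mul_pos hl₀ hx)
      (lt_mul_of_one_lt_left hx hl) (hf x hx)
    exact hax.trans_le (by gcongr)
  · obtain ⟨l, hal, hl⟩ := (((hslope.mono_left (nhdsLT_le_nhdsNE _)).eventually_lt_const ha).and
      (Ioo_mem_nhdsLT one_pos)).exists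
    filter_upwards [(tendsto_slope_mul_left_div_rpow hl.1 hK).eventually_lt_const hal,
      eventually_gt_atTop 0] with x hax hx
    have hle : f' x ≤ slope f x (l * x) := slope_comm f x (l * x) ▸
      hconc.le_slope_of_hasDerivAt (mul_pos hl.1 hx) hx (mul_lt_of_lt_one_left hx hl.2) (hf x hx)
    exact lt_of_le_of_lt (by gcongr) hax

end ConcaveAsymptotics

theorem tendsto_rpow_div_self_atTop {α : ℝ} (hα : α < 1) :
    Tendsto (fun x : ℝ => x ^ α / x) atTop (𝓝 0) := by
  refine (tendsto_rpow_neg_atTop (sub_pos.2 hα)).congr' ?_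
  filter_upwards [eventually_gt_atTop 0] with x hx
  rw [neg_sub, Real.rpow_sub_one hx.ne']

section ExpRescale

/-- The function `f`, measured against `x ^ ρ`, in the logarithmic variable `t = log x`. This
substitution turns equations equivariant under the dilations `x ↦ l * x` into autonomous ones. -/
noncomputable def expRescale (ρ : ℝ) (f : ℝ → ℝ) (t : ℝ) : ℝ := f (Real.exp t) / Real.exp t ^ ρ

/-- The first derivative of `expRescale ρ f`, where `f'` is the derivative of `f`. -/
noncomputable def expRescaleDeriv (ρ : ℝ) (f f' : ℝ → ℝ) (t : ℝ) : ℝ :=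
  expRescale (ρ - 1) f' t - ρ * expRescale ρ f t

/-- The second derivative of `expRescale ρ f`, where `f'` and `f''` are the derivatives of `f`. -/
noncomputable def expRescaleDeriv₂ (ρ : ℝ) (f f' f'' : ℝ → ℝ) (t : ℝ) : ℝ :=
  expRescaleDeriv (ρ - 1) f' f'' t - ρ * expRescaleDeriv ρ f f' t

variable {ρ t : ℝ} {f f' f'' : ℝ → ℝ}

theorem expRescale_log {x : ℝ} (hx : 0 < x) : expRescale ρ f (Real.log x) = f x / x ^ ρ := by
  rw [expRescale, Real.exp_log hx]

theorem tendsto_div_rpow_of_tendsto_expRescale {K : ℝ}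
    (h : Tendsto (expRescale ρ f) atTop (𝓝 K)) : Tendsto (fun x => f x / x ^ ρ) atTop (𝓝 K) :=
  (h.comp Real.tendsto_log_atTop).congr' <|
    (eventually_gt_atTop 0).mono fun _ hx => expRescale_log hx

theorem hasDerivAt_expRescale (hf : HasDerivAt f (f' (Real.exp t)) (Real.exp t)) :
    HasDerivAt (expRescale ρ f) (expRescaleDeriv ρ f f' t) t := by
  have hx : Real.exp t ≠ 0 := (Real.exp_pos t).ne'
  have hxρ : Real.exp t ^ ρ ≠ 0 := (Real.rpow_pos_of_pos (Real.exp_pos t) ρ).ne'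
  have hquot := hf.div (Real.hasDerivAt_rpow_const (p := ρ) (Or.inl hx)) hxρ
  refine (hquot.comp t (Real.hasDerivAt_exp t)).congr_deriv ?_
  rw [expRescaleDeriv, expRescale, expRescale, Real.rpow_sub_one hx]
  field_simp

theorem hasDerivAt_expRescaleDeriv (hf : HasDerivAt f (f' (Real.exp t)) (Real.exp t))
    (hf' : HasDerivAt f' (f'' (Real.exp t)) (Real.exp t)) :
    HasDerivAt (expRescaleDeriv ρ f f') (expRescaleDeriv₂ ρ f f' f'' t) t :=
  (hasDerivAt_expRescale hf').sub ((hasDerivAt_expRescale hf).const_mul ρ)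

end ExpRescale

section RamseyProblem

/-- The limiting consumption rate of the isoelastic Ramsey problem. -/
noncomputable def limitConsumptionRate (β γ μ σ : ℝ) : ℝ :=
  β / γ + (1 - γ) * (μ / γ + σ ^ 2 / 2)

/-- `v` is a nonnegative concave increasing classical solution on `(0, ∞)` of the HJB equation of
the stochastic Ramsey problem with discount rate `β`, utility `x ^ (1 - γ) / (1 - γ)`, depreciation
rate `μ`, volatility `σ` and production function `f`; `v'` and `v''` are its derivatives. -/
structure IsIsoelasticRamseySolution (β γ μ σ : ℝ) (f v v' v'' : ℝ → ℝ) : Prop where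
  hasDerivAt : ∀ x > 0, HasDerivAt v (v' x) x
  hasDerivAt_deriv : ∀ x > 0, HasDerivAt v' (v'' x) x
  nonneg : ∀ x > 0, 0 ≤ v x
  concaveOn : ConcaveOn ℝ (Ioi 0) v
  deriv_pos : ∀ x > 0, 0 < v' x
  hjb : ∀ x > 0, β * v x = (1 / 2) * σ ^ 2 * x ^ 2 * v'' x + (f x - μ * x) * v' x
    + (γ / (1 - γ)) * (v' x) ^ ((γ - 1) / γ)

theorem limitConsumptionRate_pos {β γ μ : ℝ} (σ : ℝ) (hβ : 0 < β) (hγ₀ : 0 < γ) (hγ₁ : γ < 1)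
    (hμ : -β < μ) : 0 < limitConsumptionRate β γ μ σ := by
  have h1γ : 0 < 1 - γ := sub_pos.2 hγ₁
  have hrate : limitConsumptionRate β γ μ σ =
      β + (1 - γ) * ((β + μ) / γ) + (1 - γ) * (σ ^ 2 / 2) := by
    rw [limitConsumptionRate]
    field_simp
    ring
  have hβμ : 0 < β + μ := by linarith
  rw [hrate]
  positivity

namespace IsIsoelasticRamseySolution

variable {β γ μ σ : ℝ} {f v v' v'' : ℝ → ℝ}

theorem expRescale_nonneg (h : IsIsoelasticRamseySolution β γ μ σ f v v' v'') (ρ t : ℝ) :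
    0 ≤ expRescale ρ v t :=
  div_nonneg (h.nonneg _ (Real.exp_pos t)) (Real.rpow_nonneg (Real.exp_pos t).le ρ)

theorem expRescale_deriv_pos (h : IsIsoelasticRamseySolution β γ μ σ f v v' v'') (ρ t : ℝ) :
    0 < expRescale ρ v' t :=
  div_pos (h.deriv_pos _ (Real.exp_pos t)) (Real.rpow_pos_of_pos (Real.exp_pos t) ρ)

theorem expRescale_deriv_le (h : IsIsoelasticRamseySolution β γ μ σ f v v' v'') (ρ t : ℝ) :
    expRescale (ρ - 1) v' t ≤ expRescale ρ v t := by
  have hx := Real.exp_pos t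
  have hle := mul_deriv_le_of_concaveOn h.concaveOn h.nonneg hx (h.hasDerivAt _ hx)
  rw [expRescale, expRescale, Real.rpow_sub_one hx.ne', div_div_eq_mul_div, mul_comm]
  gcongr

theorem expRescale_deriv₂_nonpos (h : IsIsoelasticRamseySolution β γ μ σ f v v' v'') (ρ t : ℝ) :
    expRescale ρ v'' t ≤ 0 := by
  have hx := Real.exp_pos t
  exact div_nonpos_of_nonpos_of_nonneg (nonpos_of_concaveOn_of_hasDerivAt (Ioi_mem_nhds hx)
    h.concaveOn h.hasDerivAt (h.hasDerivAt_deriv _ hx)) (Real.rpow_nonneg hx.le ρ)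

theorem expRescale_hjb (h : IsIsoelasticRamseySolution β γ μ σ f v v' v'') (hγ₀ : 0 < γ) (t : ℝ) :
    β * expRescale (1 - γ) v t = 1 / 2 * σ ^ 2 * expRescale (-γ - 1) v'' t
      + (expRescale 1 f t - μ) * expRescale (-γ) v' t
      + γ / (1 - γ) / expRescale (-γ) v' t ^ ((1 - γ) / γ) := by
  have hx := Real.exp_pos t
  have hv' := h.deriv_pos _ hx
  have hjb := h.hjb _ hx
  rw [← neg_sub 1 γ, neg_div, Real.rpow_neg hv'.le] at hjb
  simp only [expRescale]
  set x := Real.exp t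
  have hxγ : 0 < x ^ γ := Real.rpow_pos_of_pos hx γ
  have hpow : (v' x / x ^ (-γ)) ^ ((1 - γ) / γ) = v' x ^ ((1 - γ) / γ) * (x / x ^ γ) := by
    rw [Real.rpow_neg hx.le, div_inv_eq_mul, Real.mul_rpow hv'.le hxγ.le, ← Real.rpow_mul hx.le,
      mul_div_cancel₀ _ hγ₀.ne', Real.rpow_sub hx, Real.rpow_one]
  rw [hpow, Real.rpow_sub hx, Real.rpow_sub hx, Real.rpow_neg hx.le, Real.rpow_one]
  have hpow₀ : 0 < v' x ^ ((1 - γ) / γ) := Real.rpow_pos_of_pos hv' _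
  field_simp at hjb ⊢
  linear_combination hjb

theorem diffusion_mul_rpow_eq (h : IsIsoelasticRamseySolution β γ μ σ f v v' v'') (hγ₀ : 0 < γ)
    (t : ℝ) :
    1 / 2 * σ ^ 2 * expRescaleDeriv₂ (1 - γ) v v' v'' t * expRescale (-γ) v' t ^ ((1 - γ) / γ) =
      (β * expRescale (1 - γ) v t
        + (1 / 2 * σ ^ 2 * γ + μ - expRescale 1 f t) * expRescale (-γ) v' t
        - 1 / 2 * σ ^ 2 * (1 - γ) * expRescaleDeriv (1 - γ) v v' t)
        * expRescale (-γ) v' t ^ ((1 - γ) / γ) - γ / (1 - γ) := by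
  have hpow : expRescale (-γ) v' t ^ ((1 - γ) / γ) ≠ 0 :=
    (Real.rpow_pos_of_pos (h.expRescale_deriv_pos _ t) _).ne'
  have hjb := h.expRescale_hjb hγ₀ t
  rw [← sub_eq_iff_eq_add', eq_div_iff hpow] at hjb
  simp only [expRescaleDeriv₂, expRescaleDeriv, sub_sub_cancel_left]
  linear_combination -hjb

theorem hasDerivAt_expRescale (h : IsIsoelasticRamseySolution β γ μ σ f v v' v'') (t : ℝ) :
    HasDerivAt (expRescale (1 - γ) v) (expRescaleDeriv (1 - γ) v v' t) t :=
  _root_.hasDerivAt_expRescale (h.hasDerivAt _ (Real.exp_pos t))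

theorem hasDerivAt_expRescaleDeriv (h : IsIsoelasticRamseySolution β γ μ σ f v v' v'') (t : ℝ) :
    HasDerivAt (expRescaleDeriv (1 - γ) v v') (expRescaleDeriv₂ (1 - γ) v v' v'' t) t :=
  _root_.hasDerivAt_expRescaleDeriv (h.hasDerivAt _ (Real.exp_pos t))
    (h.hasDerivAt_deriv _ (Real.exp_pos t))

theorem isBoundedUnder_ge_expRescale (h : IsIsoelasticRamseySolution β γ μ σ f v v' v'') :
    IsBoundedUnder (· ≥ ·) atTop (expRescale (1 - γ) v) :=
  isBoundedUnder_of ⟨0, h.expRescale_nonneg _⟩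

theorem exists_eventually_mul_rpow_le (h : IsIsoelasticRamseySolution β γ μ σ f v v' v'')
    (hβ : 0 < β) (hγ₀ : 0 < γ) (hμ : -β < μ) (hf : Tendsto (expRescale 1 f) atTop (𝓝 0)) :
    ∃ b > 0, ∀ᶠ t in atTop,
      b * expRescale (1 - γ) v t * expRescale (-γ) v' t ^ ((1 - γ) / γ) ≤ γ / (1 - γ) := by
  obtain ⟨b, hb, hb_lt⟩ := exists_between (lt_min hβ (neg_lt_iff_pos_add'.1 hμ))
  have hbβ : 0 < β - b := sub_pos.2 (hb_lt.trans_le (min_le_left _ _))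
  have hbμ : 0 < β + μ - b := sub_pos.2 (hb_lt.trans_le (min_le_right _ _))
  refine ⟨b, hb, ?_⟩
  filter_upwards [hf.eventually_lt_const hbμ] with t ht
  have hp := h.expRescale_deriv_pos (-γ) t
  have hdiffusion : 1 / 2 * σ ^ 2 * expRescale (-γ - 1) v'' t ≤ 0 :=
    mul_nonpos_of_nonneg_of_nonpos (by positivity) (h.expRescale_deriv₂_nonpos _ t)
  have hdrift : (expRescale 1 f t - μ) * expRescale (-γ) v' t ≤
      (β - b) * expRescale (1 - γ) v t :=
    calc (expRescale 1 f t - μ) * expRescale (-γ) v' t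
        ≤ (β - b) * expRescale (-γ) v' t := mul_le_mul_of_nonneg_right (by linarith) hp.le
      _ ≤ (β - b) * expRescale (1 - γ) v t := by
        gcongr
        simpa using h.expRescale_deriv_le (1 - γ) t
  rw [← le_div_iff₀ (Real.rpow_pos_of_pos hp _)]
  linarith [h.expRescale_hjb hγ₀ t]

theorem isBoundedUnder_expRescale (h : IsIsoelasticRamseySolution β γ μ σ f v v' v'')
    (hβ : 0 < β) (hγ₀ : 0 < γ) (hγ₁ : γ < 1) (hμ : -β < μ)
    (hf : Tendsto (expRescale 1 f) atTop (𝓝 0)) :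
    IsBoundedUnder (· ≤ ·) atTop (expRescale (1 - γ) v) := by
  have h1γ : 0 < 1 - γ := sub_pos.2 hγ₁
  obtain ⟨b, hb, hle⟩ := h.exists_eventually_mul_rpow_le hβ hγ₀ hμ hf
  obtain ⟨C, hC, hC₀⟩ : ∃ C, γ / (1 - γ) < b * C * ((1 - γ) * C) ^ ((1 - γ) / γ) ∧ 0 < C := by
    have hlim : Tendsto (fun C => b * C * ((1 - γ) * C) ^ ((1 - γ) / γ)) atTop atTop :=
      (tendsto_id.const_mul_atTop hb).atTop_mul_atTop₀
        ((tendsto_rpow_atTop (by positivity)).comp (tendsto_id.const_mul_atTop h1γ))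
    exact ((hlim.eventually_gt_atTop _).and (eventually_gt_atTop 0)).exists
  refine isBoundedUnder_le_of_deriv_neg (C := C) (.of_forall h.hasDerivAt_expRescale) ?_
  filter_upwards [hle] with t ht hCt
  rw [expRescaleDeriv, sub_sub_cancel_left]
  by_contra! hge
  have hp : (1 - γ) * C ≤ expRescale (-γ) v' t := by
    calc (1 - γ) * C ≤ (1 - γ) * expRescale (1 - γ) v t := by gcongr
      _ ≤ expRescale (-γ) v' t := sub_nonneg.1 hge
  have hw := h.expRescale_nonneg (1 - γ) t
  exact hC.not_ge (le_trans (by gcongr) ht)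

theorem tendsto_expRescale_deriv_comp {ι : Type*} {l : Filter ι} {u : ι → ℝ} {L : ℝ}
    (hv : Tendsto (expRescale (1 - γ) v ∘ u) l (𝓝 L))
    (hv' : Tendsto (expRescaleDeriv (1 - γ) v v' ∘ u) l (𝓝 0)) :
    Tendsto (expRescale (-γ) v' ∘ u) l (𝓝 ((1 - γ) * L)) := by
  have hlim := hv'.add (hv.const_mul (1 - γ))
  simpa [Function.comp_def, expRescaleDeriv] using hlim

theorem tendsto_diffusion_mul_rpow (h : IsIsoelasticRamseySolution β γ μ σ f v v' v'')
    (hγ₀ : 0 < γ) (hγ₁ : γ < 1) (hf : Tendsto (expRescale 1 f) atTop (𝓝 0))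
    {ι : Type*} {l : Filter ι} {u : ι → ℝ} {L : ℝ} (hL : 0 ≤ L) (hu : Tendsto u l atTop)
    (hv : Tendsto (expRescale (1 - γ) v ∘ u) l (𝓝 L))
    (hv' : Tendsto (expRescaleDeriv (1 - γ) v v' ∘ u) l (𝓝 0)) :
    Tendsto (fun i => 1 / 2 * σ ^ 2 * expRescaleDeriv₂ (1 - γ) v v' v'' (u i) *
        expRescale (-γ) v' (u i) ^ ((1 - γ) / γ)) l
      (𝓝 (γ / (1 - γ) * (limitConsumptionRate β γ μ σ * ((1 - γ) * L) ^ γ⁻¹ - 1))) := by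
  have h1γ : 0 < 1 - γ := sub_pos.2 hγ₁
  have hp := tendsto_expRescale_deriv_comp hv hv'
  have hpow := hp.rpow_const (p := (1 - γ) / γ) (Or.inr (by positivity))
  have hdrift := (tendsto_const_nhds (x := 1 / 2 * σ ^ 2 * γ + μ)).sub (hf.comp hu)
  have hlim := (((((hv.const_mul β).add (hdrift.mul hp)).sub
    (hv'.const_mul (1 / 2 * σ ^ 2 * (1 - γ)))).mul hpow).sub_const (γ / (1 - γ)))
  have hexp : ((1 - γ) * L) ^ γ⁻¹ = (1 - γ) * L * ((1 - γ) * L) ^ ((1 - γ) / γ) := by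
    have hγ_inv : γ⁻¹ = 1 + (1 - γ) / γ := by field_simp; ring
    rw [hγ_inv, Real.rpow_one_add' (by positivity) (by positivity)]
  convert hlim using 2 with i
  · exact h.diffusion_mul_rpow_eq hγ₀ (u i)
  · rw [hexp, limitConsumptionRate]
    field_simp
    ring

theorem limsup_expRescale_le (h : IsIsoelasticRamseySolution β γ μ σ f v v' v'')
    (hβ : 0 < β) (hγ₀ : 0 < γ) (hγ₁ : γ < 1) (hμ : -β < μ)
    (hf : Tendsto (expRescale 1 f) atTop (𝓝 0)) :
    (1 - γ) * limsup (expRescale (1 - γ) v) atTop ≤ (limitConsumptionRate β γ μ σ)⁻¹ ^ γ := by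
  have h1γ : 0 < 1 - γ := sub_pos.2 hγ₁
  have hc := limitConsumptionRate_pos σ hβ hγ₀ hγ₁ hμ
  obtain ⟨u, hu, hwu, hw'u, hw''u⟩ := exists_seq_tendsto_limsup_of_hasDerivAt
    (.of_forall h.hasDerivAt_expRescale) (.of_forall h.hasDerivAt_expRescaleDeriv)
    (h.isBoundedUnder_expRescale hβ hγ₀ hγ₁ hμ hf)
    h.isBoundedUnder_ge_expRescale.isCoboundedUnder_le
  set L := limsup (expRescale (1 - γ) v) atTop
  have hL : 0 ≤ L := ge_of_tendsto' hwu fun n => h.expRescale_nonneg _ _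
  have hpow := (tendsto_expRescale_deriv_comp hwu hw'u).rpow_const (p := (1 - γ) / γ)
    (Or.inr (by positivity))
  have hbound := ((tendsto_one_div_add_atTop_nhds_zero_nat (𝕜 := ℝ)).const_mul
    (1 / 2 * σ ^ 2)).mul hpow
  have hlimit := le_of_tendsto_of_tendsto'
    (h.tendsto_diffusion_mul_rpow hγ₀ hγ₁ hf hL hu hwu hw'u) hbound fun n => by
      have hpn := h.expRescale_deriv_pos (-γ) (u n)
      have hn := hw''u n
      dsimp only [Function.comp_apply]
      gcongr
  rw [mul_zero, zero_mul] at hlimit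
  have hle : limitConsumptionRate β γ μ σ * ((1 - γ) * L) ^ γ⁻¹ ≤ 1 :=
    sub_nonpos.1 (nonpos_of_mul_nonpos_right hlimit (by positivity))
  rw [← Real.rpow_inv_le_iff_of_pos (by positivity) (by positivity) hγ₀]
  exact ((le_div_iff₀' hc).2 hle).trans_eq (one_div _)

theorem le_liminf_expRescale (h : IsIsoelasticRamseySolution β γ μ σ f v v' v'')
    (hβ : 0 < β) (hγ₀ : 0 < γ) (hγ₁ : γ < 1) (hμ : -β < μ)
    (hf : Tendsto (expRescale 1 f) atTop (𝓝 0)) :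
    (limitConsumptionRate β γ μ σ)⁻¹ ^ γ ≤ (1 - γ) * liminf (expRescale (1 - γ) v) atTop := by
  have h1γ : 0 < 1 - γ := sub_pos.2 hγ₁
  have hc := limitConsumptionRate_pos σ hβ hγ₀ hγ₁ hμ
  obtain ⟨u, hu, hwu, hw'u, hw''u⟩ := exists_seq_tendsto_liminf_of_hasDerivAt
    (.of_forall h.hasDerivAt_expRescale) (.of_forall h.hasDerivAt_expRescaleDeriv)
    h.isBoundedUnder_ge_expRescale
    (h.isBoundedUnder_expRescale hβ hγ₀ hγ₁ hμ hf).isCoboundedUnder_ge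
  set L := liminf (expRescale (1 - γ) v) atTop
  have hL : 0 ≤ L := ge_of_tendsto' hwu fun n => h.expRescale_nonneg _ _
  have hpow := (tendsto_expRescale_deriv_comp hwu hw'u).rpow_const (p := (1 - γ) / γ)
    (Or.inr (by positivity))
  have hbound := ((tendsto_one_div_add_atTop_nhds_zero_nat (𝕜 := ℝ)).neg.const_mul
    (1 / 2 * σ ^ 2)).mul hpow
  have hlimit := le_of_tendsto_of_tendsto' hbound
    (h.tendsto_diffusion_mul_rpow hγ₀ hγ₁ hf hL hu hwu hw'u) fun n => by
      have hpn := h.expRescale_deriv_pos (-γ) (u n)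
      have hn := hw''u n
      dsimp only [Function.comp_apply]
      gcongr
  rw [neg_zero, mul_zero, zero_mul] at hlimit
  have hge : 1 ≤ limitConsumptionRate β γ μ σ * ((1 - γ) * L) ^ γ⁻¹ :=
    sub_nonneg.1 (nonneg_of_mul_nonneg_right hlimit (by positivity))
  rwa [← Real.le_rpow_inv_iff_of_pos (by positivity) (by positivity) hγ₀,
    inv_le_iff_one_le_mul₀' hc]

theorem tendsto_expRescale (h : IsIsoelasticRamseySolution β γ μ σ f v v' v'')
    (hβ : 0 < β) (hγ₀ : 0 < γ) (hγ₁ : γ < 1) (hμ : -β < μ)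
    (hf : Tendsto (expRescale 1 f) atTop (𝓝 0)) :
    Tendsto (expRescale (1 - γ) v) atTop
      (𝓝 ((limitConsumptionRate β γ μ σ)⁻¹ ^ γ / (1 - γ))) := by
  have h1γ : 0 < 1 - γ := sub_pos.2 hγ₁
  exact tendsto_of_le_liminf_of_limsup_le
    ((div_le_iff₀' h1γ).2 (h.le_liminf_expRescale hβ hγ₀ hγ₁ hμ hf))
    ((le_div_iff₀' h1γ).2 (h.limsup_expRescale_le hβ hγ₀ hγ₁ hμ hf))
    (h.isBoundedUnder_expRescale hβ hγ₀ hγ₁ hμ hf) h.isBoundedUnder_ge_expRescale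

theorem tendsto_deriv_div_rpow (h : IsIsoelasticRamseySolution β γ μ σ f v v' v'')
    (hβ : 0 < β) (hγ₀ : 0 < γ) (hγ₁ : γ < 1) (hμ : -β < μ)
    (hf : Tendsto (fun x => f x / x) atTop (𝓝 0)) :
    Tendsto (fun x => v' x / x ^ (-γ)) atTop (𝓝 ((limitConsumptionRate β γ μ σ)⁻¹ ^ γ)) := by
  have hf_rescale : Tendsto (expRescale 1 f) atTop (𝓝 0) := by
    refine (hf.comp Real.tendsto_exp_atTop).congr fun t => ?_
    rw [Function.comp_apply, expRescale, Real.rpow_one]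
  have hv := tendsto_div_rpow_of_tendsto_expRescale (h.tendsto_expRescale hβ hγ₀ hγ₁ hμ hf_rescale)
  have hv' := tendsto_deriv_div_rpow_of_concaveOn h.hasDerivAt h.concaveOn hv
  rwa [sub_sub_cancel_left, mul_div_cancel₀ _ (sub_pos.2 hγ₁).ne'] at hv'

end IsIsoelasticRamseySolution

theorem isoelastic_feedback_consumption_limit_at_infinity_general {β γ μ σ : ℝ}
    {f v v' v'' : ℝ → ℝ} (h : IsIsoelasticRamseySolution β γ μ σ f v v' v'')
    (hβ : 0 < β) (hγ₀ : 0 < γ) (hγ₁ : γ < 1) (hμ : -β < μ)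
    (hf : Tendsto (fun x => f x / x) atTop (𝓝 0)) :
    Tendsto (fun x => (v' x) ^ (-(1 / γ)) / x) atTop
      (𝓝 (β / γ + (1 - γ) * (μ / γ + σ ^ 2 / 2))) := by
  rw [← limitConsumptionRate]
  set c := limitConsumptionRate β γ μ σ
  have hc : 0 < c⁻¹ := inv_pos.2 (limitConsumptionRate_pos σ hβ hγ₀ hγ₁ hμ)
  have hlim := (h.tendsto_deriv_div_rpow hβ hγ₀ hγ₁ hμ hf).rpow_const (p := -γ⁻¹)
    (Or.inl (Real.rpow_pos_of_pos hc γ).ne')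
  rw [Real.rpow_neg (Real.rpow_nonneg hc.le γ), Real.rpow_rpow_inv hc.le hγ₀.ne', inv_inv] at hlim
  refine hlim.congr' ?_
  filter_upwards [eventually_gt_atTop 0] with x hx
  have hx_pow : (x ^ (-γ)) ^ (-γ⁻¹) = x := by
    rw [← Real.rpow_mul hx.le, neg_mul_neg, mul_inv_cancel₀ hγ₀.ne', Real.rpow_one]
  rw [Real.div_rpow (h.deriv_pos x hx).le (Real.rpow_nonneg hx.le _), hx_pow, one_div]

end RamseyProblem

/-- The feedback consumption rate `ĉ(x) = (v'(x))^(−1/γ)/x` converges at infinity to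
`β/γ + (1−γ)(μ/γ + σ²/2)`. -/
theorem isoelastic_feedback_consumption_limit_at_infinity
    (α γ μ σ β : ℝ) (hα0 : 0 < α) (hα1 : α < 1) (hγ0 : 0 < γ) (hγ1 : γ < 1)
    (hμ : 0 < μ) (hσ : 0 < σ) (hβ : 0 < β)
    (v v' v'' : ℝ → ℝ)
    (hv'deriv : ∀ x > (0 : ℝ), HasDerivAt v (v' x) x)
    (hv''deriv : ∀ x > (0 : ℝ), HasDerivAt v' (v'' x) x)
    (hv''cont : ContinuousOn v'' (Ioi 0))
    (hvnonneg : ∀ x > (0 : ℝ), 0 ≤ v x)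
    (hconc : ConcaveOn ℝ (Ioi 0) v)
    (hv'pos : ∀ x > (0 : ℝ), 0 < v' x)
    (hHJB : ∀ x > (0 : ℝ), β * v x =
      (1 / 2) * σ ^ 2 * x ^ 2 * v'' x + (x ^ α - μ * x) * v' x
        + (γ / (1 - γ)) * (v' x) ^ ((γ - 1) / γ))
    (C₁ : ℝ) (hC₁ : 0 < C₁)
    (hlow : ∀ x > (0 : ℝ), C₁ * x ^ (1 - γ) ≤ v x) :
    Tendsto (fun x => (v' x) ^ (-(1 / γ)) / x) atTop
      (𝓝 (β / γ + (1 - γ) * (μ / γ + σ ^ 2 / 2))) := by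
  exact isoelastic_feedback_consumption_limit_at_infinity_general
    ⟨hv'deriv, hv''deriv, hvnonneg, hconc, hv'pos, hHJB⟩ hβ hγ0 hγ1 (by linarith)
    (tendsto_rpow_div_self_atTop hα1)
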